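/- Let Ω be a domain in ℝⁿ, let Q = Q(a,r) be a cube contained in Ω, let x ∈ cl(Ω) be a Q-visible point, and let β ∈ (0,1]. Then every sequence (x_i) of points of (x,a] converging to x in norm is a Cauchy sequence with respect to d̃_{β,Ω}; moreover, for any two sequences (x_i), (y_i) of points of (x,a] converging to x in norm, d̃_{β,Ω}(x_i,y_i) → 0 as i → ∞. -/

import Mathlib

/-!
Visibility makes `Ω` contain the cone over `Q(a,r)` with apex `x`: for `t ∈ (0,1]`, the cube of
centre `x + t(a-x)` and radius `t r` is the image of `Q(a,r)` under the homothety of ratio `t`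
centred at `x`, hence lies in `Ω`. So `dist(x + t(a-x), ∂Ω) ≥ t r` (`le_bdist`), and the
subhyperbolic density at that point is at most `(t r)^(β-1)` (`density_le`). As `β > 0`, this bound
is integrable up to `t = 0`: integrating it along the straight segment joining
`x + s(a-x)` to `x + t(a-x)` gives `d_β ≤ C (max s t)^β` (`dSub_le`), where `C` does not depend on
`s` and `t`. Since `t` is proportional to the distance to `x`, both assertions are instances of
the convergence `d̃_β(p,q) → 0` as `p, q → x` along `(x,a]` (`tendsto_dTil`), applied to
sequences indexed by `ℕ × ℕ` and by `ℕ` respectively.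
-/

open MeasureTheory Set Filter ENNReal NNReal

noncomputable section

/-- `ℝⁿ` equipped with the uniform norm `‖x‖ = max_i |x i|`. -/
abbrev Eu (n : ℕ) : Type := Fin n → ℝ

variable {n : ℕ}

/-- The closed cube `Q(x,r)` with center `x` and `diam Q = 2r`
(the closed ball of radius `r` in the uniform norm). -/
def cube (x : Eu n) (r : ℝ) : Set (Eu n) := Metric.closedBall x r

/-- `dist(z, ∂Ω)`, the distance from `z` to the boundary of `Ω`. -/
def bdist (Ω : Set (Eu n)) (z : Eu n) : ℝ := Metric.infDist z (frontier Ω)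

/-- The distance between two sets. -/
def setDistS (A B : Set (Eu n)) : ℝ := sInf {d : ℝ | ∃ a ∈ A, ∃ b ∈ B, d = dist a b}

/-- The line integral `∫_{[x,y]} ρ(z) ds(z)` of `ρ` over the segment `[x,y]`
with respect to arc length. -/
def segInt (ρ : Eu n → ℝ) (x y : Eu n) : ℝ :=
  ∫ t in (0:ℝ)..1, ρ (x + t • (y - x)) * ‖y - x‖

/-- The set of subhyperbolic lengths `∫_γ dist(z,∂Ω)^{α-1} ds(z)` of rectifiable curves in `Ω`
joining `x` to `y`; rectifiable curves are encoded by their arc-length parametrizations,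
i.e. `1`-Lipschitz maps `γ : [0,L] → Ω`. -/
def subLenSet (Ω : Set (Eu n)) (α : ℝ) (x y : Eu n) : Set ℝ :=
  {d : ℝ | ∃ (L : ℝ) (γ : ℝ → Eu n), 0 ≤ L ∧
    LipschitzOnWith 1 γ (Icc 0 L) ∧ γ 0 = x ∧ γ L = y ∧
    (∀ s ∈ Icc (0:ℝ) L, γ s ∈ Ω) ∧
    IntervalIntegrable (fun s => bdist Ω (γ s) ^ (α - 1)) volume 0 L ∧
    d = ∫ s in (0:ℝ)..L, bdist Ω (γ s) ^ (α - 1)}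

/-- The subhyperbolic metric `d_{α,Ω}(x,y)`. -/
def dSub (Ω : Set (Eu n)) (α : ℝ) (x y : Eu n) : ℝ := sInf (subLenSet Ω α x y)

/-- The metric `d̃_{α,Ω}(x,y) = d_{α,Ω}(x,y) + ‖x-y‖^α`. -/
def dTil (Ω : Set (Eu n)) (α : ℝ) (x y : Eu n) : ℝ := dSub Ω α x y + ‖x - y‖ ^ α

/-- The half-open segment `(x,a]`. -/
def segOC (x a : Eu n) : Set (Eu n) := {z | ∃ t ∈ Set.Ioc (0:ℝ) 1, z = x + t • (a - x)}

/-- `x` is `Q`-visible in `Ω`: for each `y ∈ Q` the half-open segment `(x,y]` lies in `Ω`. -/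
def QVisible (Ω Q : Set (Eu n)) (x : Eu n) : Prop :=
  ∀ y ∈ Q, ∀ t ∈ Set.Ioc (0:ℝ) 1, x + t • (y - x) ∈ Ω

/-- `O_ε(∂Ω)`, the ε-neighborhood of `∂Ω` in `Ω`. -/
def Oeps (Ω : Set (Eu n)) (ε : ℝ) : Set (Eu n) := {x ∈ Ω | bdist Ω x < ε}

section Visible

variable {Ω : Set (Eu n)} {a x : Eu n} {r β : ℝ}

lemma bdist_nonneg (z : Eu n) : 0 ≤ bdist Ω z := Metric.infDist_nonneg

lemma subLenSet_nonneg {p q : Eu n} {d : ℝ} (h : d ∈ subLenSet Ω β p q) : 0 ≤ d := by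
  obtain ⟨L, γ, hL, -, -, -, -, -, rfl⟩ := h
  exact intervalIntegral.integral_nonneg hL fun s _ => Real.rpow_nonneg (bdist_nonneg _) _

lemma dSub_nonneg (p q : Eu n) : 0 ≤ dSub Ω β p q :=
  Real.sInf_nonneg fun _ h => subLenSet_nonneg h

lemma dTil_nonneg (p q : Eu n) : 0 ≤ dTil Ω β p q :=
  add_nonneg (dSub_nonneg p q) (Real.rpow_nonneg (norm_nonneg _) _)

lemma dSub_le_of_mem {p q : Eu n} {d : ℝ} (h : d ∈ subLenSet Ω β p q) : dSub Ω β p q ≤ d :=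
  csInf_le ⟨0, fun _ h => subLenSet_nonneg h⟩ h

/-- Running a curve backwards preserves its subhyperbolic length. -/
lemma subLenSet_subset_swap (p q : Eu n) : subLenSet Ω β p q ⊆ subLenSet Ω β q p := by
  rintro d ⟨L, γ, hL, hlip, h0, h1, hmem, hint, rfl⟩
  have hmaps : MapsTo (fun s => L - s) (Icc 0 L) (Icc 0 L) := fun s hs =>
    ⟨by linarith [hs.2], by linarith [hs.1]⟩
  refine ⟨L, fun s => γ (L - s), hL, ?_, by simpa using h1, by simpa using h0,
    fun s hs => hmem _ (hmaps hs), ?_, ?_⟩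
  · have h2 : LipschitzOnWith 1 (fun s : ℝ => L - s) (Icc 0 L) :=
      LipschitzOnWith.of_dist_le_mul fun s _ t _ => by
        rw [dist_sub_left, NNReal.coe_one, one_mul]
    have h3 := hlip.comp h2 hmaps
    rwa [mul_one] at h3
  · simpa using (hint.comp_sub_left L).symm
  · have := intervalIntegral.integral_comp_sub_left (a := 0) (b := L)
      (fun s => bdist Ω (γ s) ^ (β - 1)) L
    simpa using this.symm

lemma dSub_comm (p q : Eu n) : dSub Ω β p q = dSub Ω β q p := by
  unfold dSub
  rw [(subLenSet_subset_swap p q).antisymm (subLenSet_subset_swap q p)]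

/-- The homothety of ratio `t` centred at `x` maps `Q(a,r)` onto a cube contained in `Ω`. -/
lemma le_bdist (hΩ : IsOpen Ω) (hvis : QVisible Ω (cube a r) x) (hne : (frontier Ω).Nonempty)
    {t : ℝ} (ht : t ∈ Ioc (0 : ℝ) 1) : t * r ≤ bdist Ω (x + t • (a - x)) := by
  refine (Metric.le_infDist hne).2 fun y hy => ?_
  by_contra! hlt
  have ht0 := ht.1
  -- `y` is the image of `w = x + t⁻¹(y - x) ∈ Q(a,r)` under the homothety, so `y ∈ Ω`.
  have hw : x + t⁻¹ • (y - x) ∈ cube a r := by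
    have e : x + t⁻¹ • (y - x) - a = t⁻¹ • (y - (x + t • (a - x))) := by
      ext i
      simp
      field_simp
      ring
    rw [cube, Metric.mem_closedBall, dist_eq_norm, e, norm_smul, Real.norm_of_nonneg
      (inv_nonneg.2 ht0.le), ← dist_eq_norm, dist_comm, inv_mul_le_iff₀ ht0]
    exact hlt.le
  have hyΩ := hvis _ hw t ht
  rw [add_sub_cancel_left, smul_smul, mul_inv_cancel₀ ht0.ne', one_smul,
    add_sub_cancel] at hyΩ
  exact (hΩ.frontier_eq ▸ hy).2 hyΩ

/-- The bound also holds when `∂Ω` is empty: then `bdist` takes the junk value `0`, and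
`0 ^ (β - 1)` is `0` or, if `β = 1`, equal to `1`. -/
lemma density_le (hΩ : IsOpen Ω) (hr : 0 < r) (hvis : QVisible Ω (cube a r) x) (hβ : β ≤ 1)
    {t : ℝ} (ht : t ∈ Ioc (0 : ℝ) 1) :
    bdist Ω (x + t • (a - x)) ^ (β - 1) ≤ (t * r) ^ (β - 1) := by
  have htr : 0 < t * r := mul_pos ht.1 hr
  rcases (frontier Ω).eq_empty_or_nonempty with he | hne
  · rw [bdist, he, Metric.infDist_empty]
    rcases hβ.eq_or_lt with rfl | h
    · simp
    · rw [Real.zero_rpow (by linarith)]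
      positivity
  · exact Real.rpow_le_rpow_of_nonpos htr (le_bdist hΩ hvis hne ht) (by linarith)

lemma continuousOn_density (hΩ : IsOpen Ω) (hr : 0 < r) (hvis : QVisible Ω (cube a r) x) :
    ContinuousOn (fun t : ℝ => bdist Ω (x + t • (a - x)) ^ (β - 1)) (Ioc 0 1) := by
  rcases (frontier Ω).eq_empty_or_nonempty with he | hne
  · simp only [bdist, he, Metric.infDist_empty]
    exact continuousOn_const
  · refine ContinuousOn.rpow_const ?_ fun t ht =>
      Or.inl ((mul_pos ht.1 hr).trans_le (le_bdist hΩ hvis hne ht)).ne'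
    exact ((Metric.continuous_infDist_pt _).comp (by fun_prop)).continuousOn

/-- The straight segment, parametrized by arc length, as a competitor for `d_β`. -/
lemma dSub_le_of_le (hΩ : IsOpen Ω) (hr : 0 < r) (hvis : QVisible Ω (cube a r) x)
    (hβ : β ∈ Ioc (0 : ℝ) 1) (hD : 0 < ‖a - x‖) {s t : ℝ} (hs : 0 < s)
    (hst : s ≤ t) (ht : t ≤ 1) :
    dSub Ω β (x + s • (a - x)) (x + t • (a - x)) ≤ ‖a - x‖ * r ^ (β - 1) / β * t ^ β := by
  set D := ‖a - x‖ with hDdef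
  set f : ℝ → ℝ := fun τ => bdist Ω (x + τ • (a - x)) ^ (β - 1) with hf
  have hsub : uIcc s t ⊆ Ioc (0 : ℝ) 1 := by
    rw [uIcc_of_le hst]
    exact fun τ hτ => ⟨hs.trans_le hτ.1, hτ.2.trans ht⟩
  have hfc : ContinuousOn f (uIcc s t) := (continuousOn_density hΩ hr hvis).mono hsub
  have hmaps : MapsTo (fun σ : ℝ => σ / D + s) (Icc 0 ((t - s) * D)) (uIcc s t) := by
    intro σ hσ
    rw [uIcc_of_le hst]
    have h1 : σ / D ≤ t - s := (div_le_iff₀ hD).2 hσ.2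
    have h2 : 0 ≤ σ / D := div_nonneg hσ.1 hD.le
    exact ⟨by linarith, by linarith⟩
  have hL : 0 ≤ (t - s) * D := mul_nonneg (by linarith) hD.le
  have hmem : (∫ σ in (0 : ℝ)..((t - s) * D), f (σ / D + s)) ∈
      subLenSet Ω β (x + s • (a - x)) (x + t • (a - x)) := by
    refine ⟨(t - s) * D, fun σ => x + (σ / D + s) • (a - x), hL, ?_, by simp, ?_, ?_, ?_, rfl⟩
    · refine LipschitzOnWith.of_dist_le_mul fun σ _ τ _ => ?_
      rw [dist_add_left, dist_eq_norm, ← sub_smul, norm_smul, ← hDdef, add_sub_add_right_eq_sub,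
        div_sub_div_same, norm_div, Real.norm_of_nonneg hD.le, div_mul_cancel₀ _ hD.ne']
      simp [dist_eq_norm]
    · simp [hD.ne']
    · exact fun σ hσ => hvis a (Metric.mem_closedBall_self hr.le) _ (hsub (hmaps hσ))
    · refine ContinuousOn.intervalIntegrable ?_
      rw [uIcc_of_le hL]
      exact hfc.comp (by fun_prop) hmaps
  refine (dSub_le_of_mem hmem).trans ?_
  rw [intervalIntegral.integral_comp_div_add f hD.ne' s, zero_div, zero_add,
    mul_div_cancel_right₀ _ hD.ne', sub_add_cancel, smul_eq_mul]
  have hβ1 : -1 < β - 1 := by linarith [hβ.1]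
  have hbound : ∫ τ in s..t, f τ ≤ r ^ (β - 1) * ((t ^ β - s ^ β) / β) := by
    have hI : ∫ τ in s..t, r ^ (β - 1) * τ ^ (β - 1) = r ^ (β - 1) * ((t ^ β - s ^ β) / β) := by
      rw [intervalIntegral.integral_const_mul, integral_rpow (Or.inl hβ1), sub_add_cancel]
    rw [← hI]
    refine intervalIntegral.integral_mono_on hst hfc.intervalIntegrable
      ((intervalIntegral.intervalIntegrable_rpow' hβ1).const_mul _) fun τ hτ => ?_
    have hτ' := hsub (uIcc_of_le hst ▸ hτ)
    rw [← Real.mul_rpow hr.le hτ'.1.le, mul_comm r]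
    exact density_le hΩ hr hvis hβ.2 hτ'
  calc D * ∫ τ in s..t, f τ ≤ D * (r ^ (β - 1) * ((t ^ β - s ^ β) / β)) := by gcongr
    _ ≤ D * (r ^ (β - 1) * (t ^ β / β)) := by
      have h1 : 0 ≤ s ^ β := Real.rpow_nonneg hs.le _
      have h2 := hβ.1
      gcongr
      linarith
    _ = D * r ^ (β - 1) / β * t ^ β := by ring

lemma dSub_le (hΩ : IsOpen Ω) (hr : 0 < r) (hvis : QVisible Ω (cube a r) x)
    (hβ : β ∈ Ioc (0 : ℝ) 1) (hD : 0 < ‖a - x‖) {s t : ℝ}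
    (hs : s ∈ Ioc (0 : ℝ) 1) (ht : t ∈ Ioc (0 : ℝ) 1) :
    dSub Ω β (x + s • (a - x)) (x + t • (a - x)) ≤
      ‖a - x‖ * r ^ (β - 1) / β * (max s t) ^ β := by
  rcases le_total s t with h | h
  · rw [max_eq_right h]
    exact dSub_le_of_le hΩ hr hvis hβ hD hs.1 h ht.2
  · rw [max_eq_left h, dSub_comm]
    exact dSub_le_of_le hΩ hr hvis hβ hD ht.1 h hs.2

/-- A Hölder-type estimate for `d̃_β` along `(x,a]` near `x`. -/
lemma exists_dTil_le (hΩ : IsOpen Ω) (hr : 0 < r) (hvis : QVisible Ω (cube a r) x)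
    (hQ : cube a r ⊆ Ω) (hβ : β ∈ Ioc (0 : ℝ) 1) :
    ∃ K : ℝ, ∀ p ∈ segOC x a, ∀ q ∈ segOC x a,
      dTil Ω β p q ≤ K * (dist p x + dist q x) ^ β := by
  rcases (norm_nonneg (a - x)).eq_or_lt with hD | hD
  · -- If `x = a`, then `(x,a] = {a}`, and the constant curve shows that `d_β(a,a) = 0`.
    have hax : a - x = 0 := norm_eq_zero.1 hD.symm
    refine ⟨0, ?_⟩
    rintro _ ⟨s, -, rfl⟩ _ ⟨t, -, rfl⟩
    have hxΩ : x ∈ Ω := sub_eq_zero.1 hax ▸ hQ (Metric.mem_closedBall_self hr.le)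
    have h0 : (0 : ℝ) ∈ subLenSet Ω β x x :=
      ⟨0, fun _ => x, le_rfl, (LipschitzWith.const' x).lipschitzOnWith, rfl, rfl,
        fun _ _ => hxΩ, by simp, by simp⟩
    have h1 := dSub_le_of_mem h0
    simpa [dTil, hax, Real.zero_rpow hβ.1.ne'] using h1
  · set D := ‖a - x‖ with hDdef
    refine ⟨D * r ^ (β - 1) / β * (D⁻¹) ^ β + 1, ?_⟩
    rintro _ ⟨s, hs, rfl⟩ _ ⟨t, ht, rfl⟩
    have hds : dist (x + s • (a - x)) x = s * D := by
      rw [dist_eq_norm, add_sub_cancel_left, norm_smul, Real.norm_of_nonneg hs.1.le]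
    have hdt : dist (x + t • (a - x)) x = t * D := by
      rw [dist_eq_norm, add_sub_cancel_left, norm_smul, Real.norm_of_nonneg ht.1.le]
    have htri := dist_triangle_right (x + s • (a - x)) (x + t • (a - x)) x
    have hs0 := hs.1
    have ht0 := ht.1
    have hβ0 := hβ.1
    have h1 := dSub_le hΩ hr hvis hβ hD hs ht
    have h2 : (max s t) ^ β ≤ (D⁻¹) ^ β * (s * D + t * D) ^ β := by
      rw [← Real.mul_rpow (by positivity) (by positivity)]
      refine Real.rpow_le_rpow (by positivity) ?_ hβ0.le
      have : D⁻¹ * (s * D + t * D) = s + t := by field_simp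
      rw [this]
      exact max_le (by linarith) (by linarith)
    have h3 : ‖x + s • (a - x) - (x + t • (a - x))‖ ^ β ≤ (s * D + t * D) ^ β := by
      rw [← dist_eq_norm]
      rw [hds, hdt] at htri
      exact Real.rpow_le_rpow dist_nonneg htri hβ0.le
    rw [hds, hdt, dTil]
    calc _ ≤ D * r ^ (β - 1) / β * ((D⁻¹) ^ β * (s * D + t * D) ^ β) + (s * D + t * D) ^ β := by
          refine add_le_add (h1.trans ?_) h3
          gcongr
      _ = _ := by ring

lemma tendsto_dTil (hΩ : IsOpen Ω) (hr : 0 < r) (hvis : QVisible Ω (cube a r) x)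
    (hQ : cube a r ⊆ Ω) (hβ : β ∈ Ioc (0 : ℝ) 1) {ι : Type*} {l : Filter ι} {u v : ι → Eu n}
    (hu : ∀ i, u i ∈ segOC x a) (hv : ∀ i, v i ∈ segOC x a)
    (hul : Tendsto u l (nhds x)) (hvl : Tendsto v l (nhds x)) :
    Tendsto (fun i => dTil Ω β (u i) (v i)) l (nhds 0) := by
  obtain ⟨K, hK⟩ := exists_dTil_le hΩ hr hvis hQ hβ
  refine squeeze_zero (fun i => dTil_nonneg _ _) (fun i => hK _ (hu i) _ (hv i)) ?_
  have h := (tendsto_iff_dist_tendsto_zero.1 hul).add (tendsto_iff_dist_tendsto_zero.1 hvl)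
  simpa [Real.zero_rpow hβ.1.ne'] using (h.rpow_const (Or.inr hβ.1.le)).const_mul K

end Visible

/-- Lemma 2.2 (ii).  Let `Q = Q(a,r)` be a cube in a domain `Ω ⊆ ℝⁿ`,
let `x ∈ cl(Ω)` be a `Q`-visible point and let `β ∈ (0,1]`.  Then every sequence of points
of `(x,a]` converging to `x` in norm is Cauchy with respect to `d̃_{β,Ω}`, and for any two
sequences `(x_i), (y_i)` of points of `(x,a]` converging to `x` in norm,
`d̃_{β,Ω}(x_i,y_i) → 0`. -/
theorem statement4 (n : ℕ) (Ω : Set (Eu n)) (hΩopen : IsOpen Ω) (hΩconn : IsConnected Ω)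
    (a : Eu n) (r : ℝ) (hr : 0 < r) (hQ : cube a r ⊆ Ω)
    (x : Eu n) (hx : x ∈ closure Ω) (hvis : QVisible Ω (cube a r) x)
    (β : ℝ) (hβ : β ∈ Set.Ioc (0:ℝ) 1) :
    (∀ u : ℕ → Eu n, (∀ i, u i ∈ segOC x a) → Tendsto u atTop (nhds x) →
      ∀ ε > (0:ℝ), ∃ N : ℕ, ∀ i ≥ N, ∀ j ≥ N, dTil Ω β (u i) (u j) < ε) ∧
    (∀ u v : ℕ → Eu n, (∀ i, u i ∈ segOC x a) → (∀ i, v i ∈ segOC x a) →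
      Tendsto u atTop (nhds x) → Tendsto v atTop (nhds x) →
      Tendsto (fun i => dTil Ω β (u i) (v i)) atTop (nhds 0)) := by
  refine ⟨fun u hu hux ε hε => ?_, fun u v hu hv hux hvx =>
    tendsto_dTil hΩopen hr hvis hQ hβ hu hv hux hvx⟩
  have h1 : Tendsto (fun p : ℕ × ℕ => u p.1) atTop (nhds x) := by
    rw [← prod_atTop_atTop_eq]
    exact hux.comp tendsto_fst
  have h2 : Tendsto (fun p : ℕ × ℕ => u p.2) atTop (nhds x) := by
    rw [← prod_atTop_atTop_eq]
    exact hux.comp tendsto_snd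
  have h := tendsto_dTil hΩopen hr hvis hQ hβ (fun p : ℕ × ℕ => hu p.1) (fun p => hu p.2) h1 h2
  exact eventually_atTop_prod_self'.1 (h.eventually_lt_const hε)
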